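/- Fix a real number λ > 0 and a commutative ℝ-algebra A, and let R be the ring of generalised power series in two variables u, v with coefficients in A, i.e. the Hahn series ring over the additive monoid [0,∞) × [0,∞) (componentwise order) with coefficients in A. For every F ∈ R the following hold: (i) for each γ ∈ [0,∞) the set D_γ = {(α, β) ∈ Supp(F) : α + β = γ} is finite; (ii) the function g : [0,∞)² → A defined by g(γ, k) = Σ_{(α,β) ∈ D_γ} (λ^{β−k} · C(β, k)) • F.coeff(α, β) for k ∈ ℕ, and g(γ, t) = 0 for t ∉ ℕ, has partially well-ordered support, hence defines an element T_λ(F) ∈ R; (iii) the resulting map T_λ : R → R is an injective ring homomorphism. (T_λ represents the substitution F(u, v) ↦ F(u, u·(λ + v)) given by the blow-up chart π^λ.) -/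

import Mathlib

open scoped NNReal Classical

/-- The generalised binomial coefficient `C(β,k) = β(β−1)⋯(β−k+1)/k!`
(with `C(β,0) = 1`). -/
noncomputable def genBinom (β : ℝ) (k : ℕ) : ℝ :=
  (∏ i ∈ Finset.range k, (β - i)) / (k.factorial : ℝ)

/-- The coefficient function of the substitution `F(u,v) ↦ F(u, u·(λ + v))`
(blow-up chart `π^λ`): at an exponent `(γ, k)` with `k ∈ ℕ` it equals
`Σ_{(α,β) ∈ Supp(F), α+β=γ} (λ^{β−k}·C(β,k)) • F.coeff (α,β)`, and it
vanishes at exponents `(γ, t)` with `t ∉ ℕ`. -/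
noncomputable def blowupLamCoeff (lam : ℝ) {A : Type*} [CommRing A] [Algebra ℝ A]
    (F : HahnSeries (ℝ≥0 × ℝ≥0) A) (q : ℝ≥0 × ℝ≥0) : A :=
  if h : ∃ k : ℕ, q.2 = (k : ℝ≥0) then
    ∑ᶠ p ∈ {p : ℝ≥0 × ℝ≥0 | p ∈ F.support ∧ p.1 + p.2 = q.1},
      (lam ^ ((p.2 : ℝ) - (h.choose : ℝ)) * genBinom (p.2 : ℝ) h.choose) • F.coeff p
  else 0

/-!
The substitution sends the monomial `u ^ α * v ^ β` to `u ^ (α + β) * (λ + v) ^ β`. On the support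
of a Hahn series the total degree `α + β` takes partially well-ordered values, each finitely often,
since it is strictly monotone and a partially well-ordered antichain is finite; hence the images of
the monomials can be summed. As `(λ + v) ^ (β + β') = (λ + v) ^ β * (λ + v) ^ β'`, the monomials are
mapped multiplicatively, and regrouping the product of two such sums by the exponents of the source
shows that the substitution is multiplicative.

For injectivity, the part of `F` of total degree `γ` involves finitely many distinct exponents `β`.
Up to nonzero factors, the coefficients of its image are the values `β(β-1)⋯(β-k+1)` weighted by
`λ ^ β • F_(γ-β, β)`. The descending Pochhammer polynomials span all polynomials, so Lagrange
interpolation at these `β` recovers every coefficient of `F`.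
-/

section Finsum

theorem finsum_finsum_mem_fiber {ι κ M : Type*} [AddCommMonoid M] {f : ι → M}
    (hf : f.HasFiniteSupport) (g : ι → κ) :
    ∑ᶠ j, ∑ᶠ i ∈ g ⁻¹' {j}, f i = ∑ᶠ i, f i := by
  have fiber_sum (j : κ) :
      ∑ᶠ i ∈ g ⁻¹' {j}, f i = ∑ i ∈ hf.toFinset with g i = j, f i :=
    finsum_mem_eq_sum_of_subset f
      (fun _ hi => Finset.mem_filter.2 ⟨hf.mem_toFinset.2 hi.2, hi.1⟩)
      fun _ hi => (Finset.mem_filter.1 hi).2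
  simp only [fiber_sum]
  rw [finsum_eq_sum f hf]
  exact finsum_sum_filter g hf.toFinset f

end Finsum

section Order

theorem finite_setOf_mem_and_eq_of_strictMono {α β : Type*} [PartialOrder α] [Preorder β]
    {S : Set α} (hS : S.IsPWO) {d : α → β} (hd : StrictMono d) (b : β) :
    {a | a ∈ S ∧ d a = b}.Finite := by
  refine IsAntichain.finite_of_partiallyWellOrderedOn (r := (· ≤ ·)) ?_
    (hS.mono fun a ha => ha.1)
  rintro a ⟨-, ha⟩ a' ⟨-, ha'⟩ hne hle
  exact (hd (hle.lt_of_ne hne)).ne (ha.trans ha'.symm)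

theorem injOn_snd_setOf_add_eq {Γ : Type*} [Add Γ] [IsRightCancelAdd Γ] (γ : Γ) :
    Set.InjOn Prod.snd {p : Γ × Γ | p.1 + p.2 = γ} := by
  rintro ⟨a, b⟩ hp ⟨a', b'⟩ hp' (rfl : b = b')
  exact Prod.ext (add_right_cancel (hp.trans hp'.symm)) rfl

variable {Γ : Type*} [AddCommMonoid Γ] [PartialOrder Γ] [IsOrderedCancelAddMonoid Γ]

theorem strictMono_fst_add_snd : StrictMono fun p : Γ × Γ => p.1 + p.2 := by
  intro p q hpq
  rcases Prod.lt_iff.1 hpq with ⟨h₁, h₂⟩ | ⟨h₁, h₂⟩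
  · exact add_lt_add_of_lt_of_le h₁ h₂
  · exact add_lt_add_of_le_of_lt h₁ h₂

theorem finite_setOf_mem_support_add_eq {R : Type*} [Zero R] (F : HahnSeries (Γ × Γ) R) (γ : Γ) :
    {p : Γ × Γ | p ∈ F.support ∧ p.1 + p.2 = γ}.Finite :=
  finite_setOf_mem_and_eq_of_strictMono F.isPWO_support strictMono_fst_add_snd γ

theorem isPWO_range_natCast (R : Type*) [Semiring R] [PartialOrder R] [IsOrderedRing R] :
    (Set.range (Nat.cast : ℕ → R)).IsPWO := by
  rw [← Set.image_univ]
  exact (Set.isPWO_of_wellQuasiOrderedLE _).image_of_monotone Nat.mono_cast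

end Order

section MonomialSubstitution

theorem coeff_mul_mul_eq_finsum {Γ R : Type*} [AddCommMonoid Γ] [PartialOrder Γ]
    [IsOrderedCancelAddMonoid Γ] [Semiring R] (F G : HahnSeries Γ R) (c : Γ → R) (r : Γ) :
    (F * G).coeff r * c r =
      ∑ᶠ p ∈ (fun p : Γ × Γ => p.1 + p.2) ⁻¹' {r},
        F.coeff p.1 * G.coeff p.2 * c (p.1 + p.2) := by
  rw [HahnSeries.coeff_mul, Finset.sum_mul]
  symm
  rw [finsum_mem_eq_sum_of_subset (t :=
    Finset.antidiagonal F.isPWO_support G.isPWO_support r)]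
  · refine Finset.sum_congr rfl fun p hp => ?_
    rw [(Finset.mem_antidiagonal.1 hp).2.2]
  · rintro p ⟨hpr, hp⟩
    have hFG := left_ne_zero_of_mul hp
    exact Finset.mem_antidiagonal.2 ⟨left_ne_zero_of_mul hFG, right_ne_zero_of_mul hFG, hpr⟩
  · exact fun p hp => (Finset.mem_antidiagonal.1 hp).2.2

/-- Summability of prospective images `m p` of the monomials `x ^ p`: the family `m` becomes
summable when restricted to any set of exponents that can occur as the support of a Hahn series,
so that `∑ F_p • m p` exists for every Hahn series `F = ∑ F_p x ^ p`. -/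
structure IsMonomialSummable {Γ Γ' R : Type*} [PartialOrder Γ] [PartialOrder Γ'] [Zero R]
    (m : Γ → HahnSeries Γ' R) : Prop where
  isPWO_biUnion_support {S : Set Γ} (hS : S.IsPWO) : (⋃ p ∈ S, (m p).support).IsPWO
  finite_setOf_coeff_ne_zero {S : Set Γ} (hS : S.IsPWO) (q : Γ') :
    {p | p ∈ S ∧ (m p).coeff q ≠ 0}.Finite

namespace IsMonomialSummable

variable {Γ Γ' R : Type*} [PartialOrder Γ] [PartialOrder Γ']

section Family

variable [Semiring R] {m : Γ → HahnSeries Γ' R}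

/-- The summable family `F_p • m p` whose sum is the image of `F` under the substitution
`x ^ p ↦ m p`. -/
def family (hm : IsMonomialSummable m) (F : HahnSeries Γ R) :
    HahnSeries.SummableFamily Γ' R Γ where
  toFun p := F.coeff p • m p
  isPWO_iUnion_support' := by
    refine (hm.isPWO_biUnion_support F.isPWO_support).mono (Set.iUnion_subset fun p q hq => ?_)
    exact Set.mem_biUnion (left_ne_zero_of_mul hq) (right_ne_zero_of_mul hq)
  finite_co_support' q :=
    (hm.finite_setOf_coeff_ne_zero F.isPWO_support q).subset fun _ hp =>
      ⟨left_ne_zero_of_mul hp, right_ne_zero_of_mul hp⟩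

theorem coeff_hsum_family (hm : IsMonomialSummable m) (F : HahnSeries Γ R) (q : Γ') :
    (hm.family F).hsum.coeff q = ∑ᶠ p, F.coeff p * (m p).coeff q :=
  rfl

theorem hsum_family_add (hm : IsMonomialSummable m) (F G : HahnSeries Γ R) :
    (hm.family (F + G)).hsum = (hm.family F).hsum + (hm.family G).hsum := by
  rw [← HahnSeries.SummableFamily.hsum_add]
  congr 1
  ext p : 1
  exact add_smul _ _ _

theorem hsum_family_single (hm : IsMonomialSummable m) (p : Γ) (r : R) :
    (hm.family (HahnSeries.single p r)).hsum = r • m p := by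
  ext q
  rw [coeff_hsum_family, finsum_eq_single _ p]
  · rw [HahnSeries.coeff_single_same, HahnSeries.coeff_smul, smul_eq_mul]
  · intro p' hp'
    rw [HahnSeries.coeff_single_of_ne hp', zero_mul]

end Family

variable [AddCommMonoid Γ] [IsOrderedCancelAddMonoid Γ] [AddCommMonoid Γ']
  [IsOrderedCancelAddMonoid Γ'] [CommSemiring R] {m : Multiplicative Γ →* HahnSeries Γ' R}

theorem hsum_family_mul (hm : IsMonomialSummable fun p => m (.ofAdd p)) (F G : HahnSeries Γ R) :
    (hm.family (F * G)).hsum = (hm.family F).hsum * (hm.family G).hsum := by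
  ext q
  have coeff_pair (p : Γ × Γ) : (((hm.family F).mul (hm.family G)) p).coeff q =
      F.coeff p.1 * G.coeff p.2 * (m (.ofAdd (p.1 + p.2))).coeff q := by
    change (F.coeff p.1 • m (.ofAdd p.1) * G.coeff p.2 • m (.ofAdd p.2)).coeff q = _
    rw [smul_mul_smul_comm, ← map_mul, ← ofAdd_add, HahnSeries.coeff_smul, smul_eq_mul]
  have finite_pairs := ((hm.family F).mul (hm.family G)).finite_co_support q
  rw [coeff_hsum_family, ← HahnSeries.SummableFamily.hsum_mul,
    HahnSeries.SummableFamily.coeff_hsum, ← finsum_finsum_mem_fiber finite_pairs fun p => p.1 + p.2]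
  refine finsum_congr fun r => ?_
  simp only [coeff_pair]
  exact coeff_mul_mul_eq_finsum F G (fun r => (m (.ofAdd r)).coeff q) r

/-- The substitution `∑ F_p x ^ p ↦ ∑ F_p • m p` determined by a multiplicative summable system
of images of the monomials. -/
noncomputable def subst (hm : IsMonomialSummable fun p => m (.ofAdd p)) :
    HahnSeries Γ R →+* HahnSeries Γ' R where
  toFun F := (hm.family F).hsum
  map_one' := (hm.hsum_family_single 0 1).trans <| by rw [ofAdd_zero, map_one, one_smul]
  map_mul' := hm.hsum_family_mul
  map_zero' := by
    rw [← HahnSeries.single_eq_zero (a := (0 : Γ)), hsum_family_single, zero_smul]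
  map_add' := hm.hsum_family_add

theorem coeff_subst (hm : IsMonomialSummable fun p => m (.ofAdd p)) (F : HahnSeries Γ R)
    (q : Γ') : (hm.subst F).coeff q = ∑ᶠ p, F.coeff p * (m (.ofAdd p)).coeff q :=
  rfl

end IsMonomialSummable

end MonomialSubstitution

section SecondVariable

variable (Γ₁ : Type*) {Γ₂ R : Type*} [AddCommMonoid Γ₁] [PartialOrder Γ₁]
  [IsOrderedCancelAddMonoid Γ₁] [AddCommMonoid Γ₂] [PartialOrder Γ₂] [IsOrderedCancelAddMonoid Γ₂]
  [Semiring R]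

/-- A Hahn series in one variable `v`, regarded as a Hahn series in two variables `u, v`. -/
noncomputable def inSecondVariable : HahnSeries Γ₂ R →+* HahnSeries (Γ₁ × Γ₂) R :=
  HahnSeries.embDomainRingHom (AddMonoidHom.inr Γ₁ Γ₂) (Prod.mk_right_injective 0)
    fun _ _ => by simp

variable {Γ₁}

theorem coeff_inSecondVariable (x : HahnSeries Γ₂ R) (t : Γ₂) :
    (inSecondVariable Γ₁ x).coeff (0, t) = x.coeff t :=
  HahnSeries.embDomain_coeff (a := t)

theorem fst_eq_zero_of_mem_support_inSecondVariable {x : HahnSeries Γ₂ R} {q : Γ₁ × Γ₂}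
    (hq : q ∈ (inSecondVariable Γ₁ x).support) : q.1 = 0 := by
  obtain ⟨t, -, rfl⟩ := HahnSeries.support_embDomain_subset hq
  rfl

theorem coeff_single_mul_inSecondVariable [DecidableEq Γ₁] (γ : Γ₁) (x : HahnSeries Γ₂ R)
    (q : Γ₁ × Γ₂) :
    (HahnSeries.single (γ, 0) 1 * inSecondVariable Γ₁ x).coeff q =
      if γ = q.1 then x.coeff q.2 else 0 := by
  obtain ⟨γ', t⟩ := q
  split_ifs with hγ
  · obtain rfl : γ = γ' := hγ
    have shift : ((γ, t) : Γ₁ × Γ₂) = (0, t) + (γ, 0) := by simp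
    dsimp only
    rw [shift, HahnSeries.coeff_single_mul_add, one_mul, coeff_inSecondVariable]
  · by_contra hne
    obtain ⟨a, ha, b, hb, hab⟩ := HahnSeries.support_mul_subset hne
    obtain rfl := HahnSeries.support_single_subset ha
    have hb₁ := fst_eq_zero_of_mem_support_inSecondVariable hb
    exact hγ (by simpa [hb₁] using congrArg Prod.fst hab)

theorem coeff_ofPowerSeries_eq_zero {Γ : Type*} [Semiring Γ] [PartialOrder Γ]
    [IsStrictOrderedRing Γ] (f : PowerSeries R) {t : Γ} (ht : t ∉ Set.range (Nat.cast : ℕ → Γ)) :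
    (HahnSeries.ofPowerSeries Γ R f).coeff t = 0 :=
  HahnSeries.embDomain_of_notMem_range ht

end SecondVariable

section BinomialSeries

theorem genBinom_eq_eval_descPochhammer_div (β : ℝ) (k : ℕ) :
    genBinom β k = (descPochhammer ℝ k).eval β / k.factorial := by
  rw [genBinom, descPochhammer_eval_eq_prod_range]

theorem genBinom_eq_choose (β : ℝ) (k : ℕ) : genBinom β k = Ring.choose β k := by
  have smeval_eq_eval : (descPochhammer ℤ k).smeval β = (descPochhammer ℝ k).eval β := by
    rw [← descPochhammer_map (Int.castRingHom ℝ), Polynomial.eval_map,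
      ← Polynomial.eval₂_smulOneHom_eq_smeval]
    congr 1
    exact Subsingleton.elim _ _
  rw [genBinom_eq_eval_descPochhammer_div, Ring.choose_eq_smul, smeval_eq_eval, smul_eq_mul,
    div_eq_inv_mul]

/-- The power series `(lam + X) ^ β = lam ^ β * (1 + X / lam) ^ β`, for `0 < lam`. -/
noncomputable def binomialSeriesAt (lam β : ℝ) : PowerSeries ℝ :=
  lam ^ β • PowerSeries.rescale lam⁻¹ (PowerSeries.binomialSeries ℝ β)

variable {lam : ℝ}

theorem coeff_binomialSeriesAt (hlam : 0 < lam) (β : ℝ) (k : ℕ) :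
    PowerSeries.coeff k (binomialSeriesAt lam β) = lam ^ (β - k) * genBinom β k := by
  rw [binomialSeriesAt, PowerSeries.coeff_smul, PowerSeries.coeff_rescale,
    PowerSeries.binomialSeries_coeff, genBinom_eq_choose, Real.rpow_sub hlam, Real.rpow_natCast]
  simp only [smul_eq_mul, mul_one, inv_pow]
  ring

theorem binomialSeriesAt_zero (lam : ℝ) : binomialSeriesAt lam 0 = 1 := by
  simp [binomialSeriesAt]

theorem binomialSeriesAt_add (hlam : 0 < lam) (β β' : ℝ) :
    binomialSeriesAt lam (β + β') = binomialSeriesAt lam β * binomialSeriesAt lam β' := by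
  simp only [binomialSeriesAt, PowerSeries.binomialSeries_add, map_mul, Real.rpow_add hlam,
    smul_mul_smul_comm]

end BinomialSeries

section Independence

theorem span_range_descPochhammer (K : Type*) [Field K] :
    Submodule.span K (Set.range (descPochhammer K)) = ⊤ := by
  let S : Polynomial.Sequence K :=
    { elems' := descPochhammer K
      degree_eq' := fun k => by
        rw [Polynomial.degree_eq_natDegree (monic_descPochhammer K k).ne_zero,
          descPochhammer_natDegree] }
  exact S.span fun k => by
    change IsUnit (descPochhammer K k).leadingCoeff
    rw [(monic_descPochhammer K k).leadingCoeff]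
    exact isUnit_one

variable {K M ι : Type*} [Field K] [AddCommGroup M] [Module K M] {s : Finset ι} {x : ι → K}
  {a : ι → M}

theorem eq_zero_of_forall_sum_eval_smul_eq_zero (hx : Set.InjOn x s)
    (h : ∀ P : Polynomial K, ∑ i ∈ s, P.eval (x i) • a i = 0) {i : ι} (hi : i ∈ s) :
    a i = 0 := by
  have hbasis := h (Lagrange.basis s x i)
  rw [Finset.sum_eq_single_of_mem i hi, Lagrange.eval_basis_self hx hi, one_smul] at hbasis
  · exact hbasis
  · intro j hj hji
    rw [Lagrange.eval_basis_of_ne hji.symm hj, zero_smul]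

theorem eq_zero_of_forall_sum_descPochhammer_smul_eq_zero (hx : Set.InjOn x s)
    (h : ∀ k, ∑ i ∈ s, (descPochhammer K k).eval (x i) • a i = 0) {i : ι} (hi : i ∈ s) :
    a i = 0 := by
  refine eq_zero_of_forall_sum_eval_smul_eq_zero hx (fun P => ?_) hi
  have hP : P ∈ Submodule.span K (Set.range (descPochhammer K)) :=
    span_range_descPochhammer K ▸ Submodule.mem_top
  induction hP using Submodule.span_induction with
  | mem P hP =>
    obtain ⟨k, rfl⟩ := hP
    exact h k
  | zero => simp only [Polynomial.eval_zero, zero_smul, Finset.sum_const_zero]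
  | add P Q _ _ hP hQ => simp only [Polynomial.eval_add, add_smul, Finset.sum_add_distrib, hP, hQ,
      add_zero]
  | smul c P _ hP => simp only [Polynomial.eval_smul, smul_assoc, ← Finset.smul_sum, hP, smul_zero]

theorem eq_zero_of_forall_sum_binomial_smul_eq_zero {M ι : Type*} [AddCommGroup M] [Module ℝ M]
    {s : Finset ι} {β : ι → ℝ} {a : ι → M} {lam : ℝ} (hlam : 0 < lam) (hβ : Set.InjOn β s)
    (h : ∀ k : ℕ, ∑ i ∈ s, (lam ^ (β i - k) * genBinom (β i) k) • a i = 0) {i : ι} (hi : i ∈ s) :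
    a i = 0 := by
  have hpow (t : ℝ) : lam ^ t ≠ 0 := (Real.rpow_pos_of_pos hlam t).ne'
  suffices hzero : lam ^ β i • a i = 0 from (smul_eq_zero_iff_right (hpow _)).1 hzero
  refine eq_zero_of_forall_sum_descPochhammer_smul_eq_zero (a := fun i => lam ^ β i • a i) hβ
    (fun k => ?_) hi
  have clear_denominator (i : ι) : (descPochhammer ℝ k).eval (β i) • lam ^ β i • a i =
      (lam ^ (k : ℝ) * k.factorial) • (lam ^ (β i - k) * genBinom (β i) k) • a i := by
    have hfact : (k.factorial : ℝ) ≠ 0 := Nat.cast_ne_zero.2 k.factorial_ne_zero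
    have hk := hpow k
    rw [smul_smul, smul_smul, genBinom_eq_eval_descPochhammer_div, Real.rpow_sub hlam]
    congr 1
    field_simp
  simp only [clear_denominator, ← Finset.smul_sum, h k, smul_zero]

end Independence

section BlowUp

variable {A : Type*} [CommRing A] [Algebra ℝ A] {lam : ℝ}

theorem blowupLamCoeff_natCast (lam : ℝ) (F : HahnSeries (ℝ≥0 × ℝ≥0) A) (γ : ℝ≥0) (k : ℕ) :
    blowupLamCoeff lam F (γ, k) =
      ∑ᶠ p ∈ {p : ℝ≥0 × ℝ≥0 | p ∈ F.support ∧ p.1 + p.2 = γ},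
        (lam ^ ((p.2 : ℝ) - k) * genBinom p.2 k) • F.coeff p := by
  have h : ∃ j : ℕ, ((γ, (k : ℝ≥0)) : ℝ≥0 × ℝ≥0).2 = j := ⟨k, rfl⟩
  have hchoose : h.choose = k := (Nat.cast_injective (R := ℝ≥0) h.choose_spec).symm
  rw [blowupLamCoeff, dif_pos h, hchoose]

theorem blowupLamCoeff_eq_zero (lam : ℝ) (F : HahnSeries (ℝ≥0 × ℝ≥0) A) {q : ℝ≥0 × ℝ≥0}
    (hq : q.2 ∉ Set.range (Nat.cast : ℕ → ℝ≥0)) : blowupLamCoeff lam F q = 0 :=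
  dif_neg fun ⟨k, hk⟩ => hq ⟨k, hk.symm⟩

variable (A) in
/-- The image `u ^ (α + β) * (lam + v) ^ β` of the monomial `u ^ α * v ^ β` under
`v ↦ u * (lam + v)`. -/
noncomputable def blowupMonomial (hlam : 0 < lam) :
    Multiplicative (ℝ≥0 × ℝ≥0) →* HahnSeries (ℝ≥0 × ℝ≥0) A where
  toFun p := HahnSeries.single (p.toAdd.1 + p.toAdd.2, 0) 1 * inSecondVariable ℝ≥0
    (HahnSeries.ofPowerSeries ℝ≥0 A
      (PowerSeries.map (algebraMap ℝ A) (binomialSeriesAt lam p.toAdd.2)))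
  map_one' := by
    simp [binomialSeriesAt_zero, ← Prod.zero_eq_mk]
  map_mul' p p' := by
    simp only [toAdd_mul, Prod.fst_add, Prod.snd_add, NNReal.coe_add, binomialSeriesAt_add hlam,
      map_mul]
    rw [mul_mul_mul_comm, HahnSeries.single_mul_single, Prod.mk_add_mk, add_zero, one_mul,
      add_add_add_comm]

theorem coeff_blowupMonomial (hlam : 0 < lam) (p q : ℝ≥0 × ℝ≥0) :
    (blowupMonomial A hlam (.ofAdd p)).coeff q = if p.1 + p.2 = q.1 then
      (HahnSeries.ofPowerSeries ℝ≥0 A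
        (PowerSeries.map (algebraMap ℝ A) (binomialSeriesAt lam p.2))).coeff q.2 else 0 :=
  coeff_single_mul_inSecondVariable _ _ q

theorem coeff_blowupMonomial_natCast (hlam : 0 < lam) (p : ℝ≥0 × ℝ≥0) (γ : ℝ≥0) (k : ℕ) :
    (blowupMonomial A hlam (.ofAdd p)).coeff (γ, k) = if p.1 + p.2 = γ then
      algebraMap ℝ A (lam ^ ((p.2 : ℝ) - k) * genBinom p.2 k) else 0 := by
  rw [coeff_blowupMonomial, HahnSeries.ofPowerSeries_apply_coeff, PowerSeries.coeff_map,
    coeff_binomialSeriesAt hlam]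

theorem coeff_blowupMonomial_eq_zero (hlam : 0 < lam) (p : ℝ≥0 × ℝ≥0) {q : ℝ≥0 × ℝ≥0}
    (hq : q.2 ∉ Set.range (Nat.cast : ℕ → ℝ≥0)) :
    (blowupMonomial A hlam (.ofAdd p)).coeff q = 0 := by
  rw [coeff_blowupMonomial, coeff_ofPowerSeries_eq_zero _ hq, ite_self]

theorem mem_support_blowupMonomial (hlam : 0 < lam) {p q : ℝ≥0 × ℝ≥0}
    (hq : q ∈ (blowupMonomial A hlam (.ofAdd p)).support) :
    p.1 + p.2 = q.1 ∧ q.2 ∈ Set.range (Nat.cast : ℕ → ℝ≥0) := by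
  refine ⟨?_, not_imp_comm.1 (coeff_blowupMonomial_eq_zero hlam p) hq⟩
  by_contra hne
  exact hq (by rw [coeff_blowupMonomial, if_neg hne])

theorem isMonomialSummable_blowupMonomial (hlam : 0 < lam) :
    IsMonomialSummable fun p => blowupMonomial A hlam (.ofAdd p) where
  isPWO_biUnion_support {S} hS := by
    have degrees_isPWO : ((fun p : ℝ≥0 × ℝ≥0 => p.1 + p.2) '' S).IsPWO :=
      hS.image_of_monotone strictMono_fst_add_snd.monotone
    refine (degrees_isPWO.prod (isPWO_range_natCast ℝ≥0)).mono ?_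
    refine Set.iUnion₂_subset fun p hp q hq => ?_
    obtain ⟨hdeg, hnat⟩ := mem_support_blowupMonomial hlam hq
    exact ⟨⟨p, hp, hdeg⟩, hnat⟩
  finite_setOf_coeff_ne_zero hS q :=
    (finite_setOf_mem_and_eq_of_strictMono hS strictMono_fst_add_snd q.1).subset
      fun _ hp => ⟨hp.1, (mem_support_blowupMonomial hlam hp.2).1⟩

variable (A) in
/-- The substitution `F(u, v) ↦ F(u, u * (lam + v))`, written `T_λ` in the informal statement. -/
noncomputable def blowupLam (hlam : 0 < lam) :
    HahnSeries (ℝ≥0 × ℝ≥0) A →+* HahnSeries (ℝ≥0 × ℝ≥0) A :=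
  (isMonomialSummable_blowupMonomial hlam).subst

theorem coeff_blowupLam (hlam : 0 < lam) (F : HahnSeries (ℝ≥0 × ℝ≥0) A) (q : ℝ≥0 × ℝ≥0) :
    (blowupLam A hlam F).coeff q = blowupLamCoeff lam F q := by
  rw [blowupLam, IsMonomialSummable.coeff_subst]
  by_cases hq : q.2 ∈ Set.range (Nat.cast : ℕ → ℝ≥0)
  · obtain ⟨γ, t⟩ := q
    obtain ⟨k, rfl⟩ := hq
    rw [blowupLamCoeff_natCast]
    refine finsum_congr fun p => ?_
    rw [coeff_blowupMonomial_natCast, finsum_eq_if, mul_ite, mul_zero, Algebra.smul_def, mul_comm]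
    by_cases hp : F.coeff p = 0 <;> simp [hp]
  · simp only [blowupLamCoeff_eq_zero lam F hq, coeff_blowupMonomial_eq_zero hlam _ hq, mul_zero,
      finsum_zero]

theorem isPWO_support_blowupLamCoeff (hlam : 0 < lam) (F : HahnSeries (ℝ≥0 × ℝ≥0) A) :
    (Function.support (blowupLamCoeff lam F)).IsPWO := by
  rw [← funext (coeff_blowupLam hlam F)]
  exact (blowupLam A hlam F).isPWO_support

theorem blowupLam_injective (hlam : 0 < lam) : Function.Injective (blowupLam A hlam) := by
  refine (injective_iff_map_eq_zero _).2 fun F hF => ?_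
  ext p
  by_contra hp
  let D := finite_setOf_mem_support_add_eq F (p.1 + p.2)
  have hD : Set.InjOn (fun p : ℝ≥0 × ℝ≥0 => (p.2 : ℝ)) D.toFinset :=
    NNReal.coe_injective.comp_injOn <|
      (injOn_snd_setOf_add_eq (p.1 + p.2)).mono fun p' hp' => (D.mem_toFinset.1 hp').2
  refine hp (eq_zero_of_forall_sum_binomial_smul_eq_zero hlam hD (fun k => ?_)
    (D.mem_toFinset.2 ⟨hp, rfl⟩))
  rw [← finsum_mem_eq_finite_toFinset_sum _ D, ← blowupLamCoeff_natCast, ← coeff_blowupLam hlam,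
    hF, HahnSeries.coeff_zero]

end BlowUp

/-- Fix `λ > 0` and a commutative `ℝ`-algebra `A`, and let `R` be
the ring of generalised power series in two variables `u, v` over `A`.  Then:
(i) for every `F ∈ R` and `γ`, the set `{(α,β) ∈ Supp(F) : α + β = γ}` is
finite; (ii) the coefficient function `blowupLamCoeff lam F` has partially
well-ordered support, hence defines an element `T_λ(F) ∈ R`; (iii) the
resulting map `T_λ : R → R` (representing `F(u,v) ↦ F(u, u·(λ+v))`) is an
injective ring homomorphism. -/
theorem blowup_lam_injective_ringHom (lam : ℝ) (hlam : 0 < lam)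
    (A : Type*) [CommRing A] [Algebra ℝ A] :
    (∀ (F : HahnSeries (ℝ≥0 × ℝ≥0) A) (γ : ℝ≥0),
        {p : ℝ≥0 × ℝ≥0 | p ∈ F.support ∧ p.1 + p.2 = γ}.Finite) ∧
    (∀ F : HahnSeries (ℝ≥0 × ℝ≥0) A,
        (Function.support (blowupLamCoeff lam F)).IsPWO) ∧
    ∃ T : HahnSeries (ℝ≥0 × ℝ≥0) A →+* HahnSeries (ℝ≥0 × ℝ≥0) A,
      Function.Injective T ∧
      ∀ (F : HahnSeries (ℝ≥0 × ℝ≥0) A) (q : ℝ≥0 × ℝ≥0),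
        (T F).coeff q = blowupLamCoeff lam F q :=
  ⟨finite_setOf_mem_support_add_eq, isPWO_support_blowupLamCoeff hlam,
    blowupLam A hlam, blowupLam_injective hlam, coeff_blowupLam hlam⟩
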